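/- Let U be a unitary operator on a complex Hilbert space H of dimension at least 2, let y ∈ H be a weakly l-sequentially supercyclic vector for U, and let z ∈ H. If liminf_n |⟨U^n y, z⟩| > 0, then liminf_n |⟨U^n y, z⟩| < limsup_n |⟨U^n y, z⟩|; in other words, the sequence {|⟨U^n y, z⟩|} cannot converge to a positive limit. -/

import Mathlib

/-!
Suppose the sequence `|⟪U^n y, z⟫|` converges to some `c > 0`. Since `dim H ≥ 2`, there is `x ≠ 0`
orthogonal to `z`. If `α i • U^(m i) y → x` weakly, then testing against `z` gives
`|α i| * |⟪U^(m i) y, z⟫| → 0`, and as the second factor tends to `c > 0`, `α i → 0`. But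
`‖U^(m i) y‖ = ‖y‖`, so `α i • U^(m i) y → 0` in norm, whence `x = 0`, a contradiction.
-/

open Filter Topology
open scoped InnerProductSpace

/-- `y` is a weakly l-sequentially supercyclic vector for `T`. -/
def WeaklyLSeqSupercyclicVector {H : Type*} [NormedAddCommGroup H]
    [InnerProductSpace ℂ H] (T : H →L[ℂ] H) (y : H) : Prop :=
  y ≠ 0 ∧ ∀ x : H, ∃ (α : ℕ → ℂ) (m : ℕ → ℕ), (∀ i, α i ≠ 0) ∧ StrictMono m ∧
    ∀ w : H, Filter.Tendsto (fun i => ⟪α i • (T ^ m i) y, w⟫_ℂ) Filter.atTop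
      (nhds ⟪x, w⟫_ℂ)

lemma exists_ne_zero_inner_eq_zero {H : Type*} [NormedAddCommGroup H] [InnerProductSpace ℂ H]
    (hdim : 2 ≤ Module.rank ℂ H) (z : H) : ∃ x : H, x ≠ 0 ∧ ⟪x, z⟫_ℂ = 0 := by
  by_contra! hcon
  have hinj : Function.Injective (innerSL ℂ z : H →L[ℂ] ℂ).toLinearMap := by
    rw [injective_iff_map_eq_zero]
    intro x hx
    by_contra hx0
    exact hcon x hx0 (inner_eq_zero_symm.mp (by simpa using hx))
  have h := LinearMap.lift_rank_le_of_injective _ hinj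
  have h1 : Module.rank ℂ H ≤ 1 := by simpa using h
  exact absurd (hdim.trans h1) (by norm_num)

/-- For a unitary `U` on a Hilbert space of dimension at least 2, a weakly
l-sequentially supercyclic vector `y` for `U`, and any `z`: if
`liminf_m |⟪U^m y, z⟫| > 0`, then `liminf_m |⟪U^m y, z⟫| < limsup_m |⟪U^m y, z⟫|`
(the sequence `|⟪U^m y, z⟫|` cannot converge to a positive limit). -/
theorem supercyclic_unitary_liminf_lt_limsup
    {H : Type*} [NormedAddCommGroup H] [InnerProductSpace ℂ H] [CompleteSpace H]
    (hdim : 2 ≤ Module.rank ℂ H)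
    (U : H →L[ℂ] H)
    (hU : U ∘L ContinuousLinearMap.adjoint U = ContinuousLinearMap.id ℂ H ∧
          ContinuousLinearMap.adjoint U ∘L U = ContinuousLinearMap.id ℂ H)
    (y : H) (hy : WeaklyLSeqSupercyclicVector U y) (z : H)
    (hliminf : 0 < Filter.liminf (fun m => ‖⟪(U ^ m) y, z⟫_ℂ‖) atTop) :
    Filter.liminf (fun m => ‖⟪(U ^ m) y, z⟫_ℂ‖) atTop <
      Filter.limsup (fun m => ‖⟪(U ^ m) y, z⟫_ℂ‖) atTop := by
  by_contra hlt
  have hnorm : ∀ n x, ‖(U ^ n) x‖ = ‖x‖ := by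
    intro n
    induction n with
    | zero => simp
    | succ k ih =>
      intro x
      rw [pow_succ, mul_apply_eq_comp, ih]
      exact (U.norm_map_iff_adjoint_comp_self.mpr hU.2) x
  have hbound : ∀ n, ‖⟪(U ^ n) y, z⟫_ℂ‖ ≤ ‖y‖ * ‖z‖ := fun n =>
    (norm_inner_le_norm _ _).trans_eq (by rw [hnorm])
  have hlim := tendsto_of_le_liminf_of_limsup_le le_rfl (not_lt.mp hlt)
    (isBoundedUnder_of ⟨_, hbound⟩) (isBoundedUnder_of ⟨0, fun n => norm_nonneg _⟩)
  obtain ⟨x, hx0, hxz⟩ := exists_ne_zero_inner_eq_zero hdim z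
  obtain ⟨α, m, -, hm, hw⟩ := hy.2 x
  have hα : Tendsto (fun i => ‖α i‖) atTop (𝓝 0) := by
    have h1 := (hw z).norm
    rw [hxz, norm_zero] at h1
    have h2 := hlim.comp hm.tendsto_atTop
    have h3 := h1.div h2 hliminf.ne'
    rw [zero_div] at h3
    refine h3.congr' ?_
    filter_upwards [h2.eventually (lt_mem_nhds hliminf)] with i hi
    simp only [Function.comp_apply] at hi
    simp only [Pi.div_apply, Function.comp_apply, inner_smul_left, norm_mul, RCLike.norm_conj]
    exact mul_div_cancel_right₀ _ hi.ne'
  have hstrong : Tendsto (fun i => α i • (U ^ m i) y) atTop (𝓝 0) := by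
    rw [tendsto_zero_iff_norm_tendsto_zero]
    simp only [norm_smul, hnorm]
    simpa using hα.mul_const ‖y‖
  have hzero := tendsto_nhds_unique (hw x) (hstrong.inner tendsto_const_nhds)
  exact hx0 (by simpa using hzero)
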